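/- Bound on the Cartan characters of the first prolongation: let T ⊆ Λ^{k+1}(W;V) be a tableau of k-derivations with trivial symbol, 0 = W_0 ⊂ … ⊂ W_n = W a full flag with Cartan characters s_i, and T^{(1)} = {ξ ∈ Hom(W,T) : δξ = 0} the first prolongation, regarded as a classical tableau in Hom(W,T) with (T^{(1)})_U = {ξ ∈ T^{(1)} : ξ|_U = 0} and characters s^{(1)}_i = dim (T^{(1)})_{W_{i-1}} − dim (T^{(1)})_{W_i}. Then for every i, s^{(1)}_i ≤ s_i + s_{i+1} + … + s_n. -/

import Mathlib

open Module

variable {W : Type*} [AddCommGroup W] [Module ℝ W] [FiniteDimensional ℝ W]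
variable {V : Type*} [AddCommGroup V] [Module ℝ V] [FiniteDimensional ℝ V]

/-- The alternating `m`-linear maps `W^m → V` vanishing whenever all of their arguments lie
in the subspace `U ⊆ W`.  For a tableau `T ⊆ Λ^m(W;V)`, the subspace `T_U` is
`T ⊓ vanishingOn m U`. -/
def vanishingOn (m : ℕ) (U : Submodule ℝ W) :
    Submodule ℝ (AlternatingMap ℝ W V (Fin m)) where
  carrier := {c | ∀ u : Fin m → W, (∀ i, u i ∈ U) → c u = 0}
  zero_mem' := by intro u _; simp
  add_mem' := by intro a b ha hb u hu; simp [ha u hu, hb u hu]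
  smul_mem' := by intro r a ha u hu; simp [ha u hu]

/-- Linear maps `W → N` vanishing on the subspace `U`. -/
def homVanishing (U : Submodule ℝ W) (N : Type*) [AddCommGroup N] [Module ℝ N] :
    Submodule ℝ (W →ₗ[ℝ] N) where
  carrier := {f | ∀ u ∈ U, f u = 0}
  zero_mem' := by intro u _; simp
  add_mem' := by intro a b ha hb u hu; simp [ha u hu, hb u hu]
  smul_mem' := by intro c f hf u hu; simp [hf u hu]

/-- The first prolongation `T^{(1)} = {ξ ∈ Hom(W,T) : δξ = 0}` of a tableau
`T ⊆ Λ^{k+1}(W;V)` of `k`-derivations with trivial symbol, where the Spencer differential is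
`(δξ)(w₀,…,w_{k+1}) = ∑ᵢ (-1)^i ξ(wᵢ)(w₀,…,ŵᵢ,…,w_{k+1})`. -/
def prolongation {k : ℕ} (T : Submodule ℝ (AlternatingMap ℝ W V (Fin (k + 1)))) :
    Submodule ℝ (W →ₗ[ℝ] AlternatingMap ℝ W V (Fin (k + 1))) where
  carrier := {ξ | (∀ w : W, ξ w ∈ T) ∧
    ∀ w : Fin (k + 2) → W,
      ∑ i : Fin (k + 2), ((-1 : ℝ) ^ (i : ℕ)) • ξ (w i) (w ∘ i.succAbove) = 0}
  zero_mem' := by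
    refine ⟨fun w => T.zero_mem, fun w => ?_⟩
    simp
  add_mem' := by
    rintro a b ⟨ha1, ha2⟩ ⟨hb1, hb2⟩
    refine ⟨fun w => T.add_mem (ha1 w) (hb1 w), fun w => ?_⟩
    have h := ha2 w
    have h' := hb2 w
    simp only [LinearMap.add_apply, AlternatingMap.add_apply, smul_add,
      Finset.sum_add_distrib, h, h', add_zero]
  smul_mem' := by
    rintro c ξ ⟨h1, h2⟩
    refine ⟨fun w => T.smul_mem c (h1 w), fun w => ?_⟩
    have h := h2 w
    calc ∑ i : Fin (k + 2), ((-1 : ℝ) ^ (i : ℕ)) • (c • ξ) (w i) (w ∘ i.succAbove)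
        = c • ∑ i : Fin (k + 2), ((-1 : ℝ) ^ (i : ℕ)) • ξ (w i) (w ∘ i.succAbove) := by
          rw [Finset.smul_sum]
          refine Finset.sum_congr rfl fun i _ => ?_
          rw [LinearMap.smul_apply, AlternatingMap.smul_apply, smul_comm]
      _ = 0 := by rw [h, smul_zero]

/-- Two nested subspaces whose dimensions differ by one differ by the span of a vector. -/
theorem exists_forall_mem_add_smul {A B : Submodule ℝ W} (hAB : A ≤ B)
    (h : finrank ℝ B = finrank ℝ A + 1) :
    ∃ w : W, ∀ b ∈ B, ∃ a ∈ A, ∃ r : ℝ, b = a + r • w := by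
  obtain ⟨w, hwB, hwA⟩ : ∃ w ∈ B, w ∉ A := by
    by_contra! hBA
    have := Submodule.finrank_mono (R := ℝ) (show B ≤ A from hBA)
    omega
  refine ⟨w, fun b hb => ?_⟩
  have hlt : A < A ⊔ ℝ ∙ w := by
    refine lt_of_le_of_ne le_sup_left fun he => hwA ?_
    rw [he]
    exact Submodule.mem_sup_right (Submodule.mem_span_singleton_self w)
  have hle : A ⊔ ℝ ∙ w ≤ B :=
    sup_le hAB ((Submodule.span_singleton_le_iff_mem w B).2 hwB)
  have heq : A ⊔ ℝ ∙ w = B := by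
    refine Submodule.eq_of_le_of_finrank_le hle ?_
    have := Submodule.finrank_lt_finrank_of_lt hlt
    omega
  rw [← heq] at hb
  obtain ⟨a, ha, y, hy, rfl⟩ := Submodule.mem_sup.1 hb
  obtain ⟨r, rfl⟩ := Submodule.mem_span_singleton.1 hy
  exact ⟨a, ha, r, rfl⟩

set_option linter.unusedSectionVars false in
/-- If an element of the prolongation vanishes on `U`, all its values lie in `T_U`. -/
theorem prolongation_apply_mem {k : ℕ}
    {T : Submodule ℝ (AlternatingMap ℝ W V (Fin (k + 1)))} {U : Submodule ℝ W}
    {ξ : W →ₗ[ℝ] AlternatingMap ℝ W V (Fin (k + 1))}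
    (hξ : ξ ∈ prolongation T ⊓ homVanishing U (AlternatingMap ℝ W V (Fin (k + 1)))) (w : W) :
    ξ w ∈ T ⊓ vanishingOn (k + 1) U := by
  obtain ⟨⟨hT, hδ⟩, hU⟩ := hξ
  refine ⟨hT w, fun u hu => ?_⟩
  have h := hδ (Fin.cons w u)
  rw [Fin.sum_univ_succ, Finset.sum_eq_zero, add_zero] at h
  · have hcomp : (Fin.cons w u : Fin (k + 2) → W) ∘ Fin.succAbove 0 = u := by
      ext j
      simp
    simpa [hcomp] using h
  · intro j _
    simp [hU (u j) (hu j)]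

instance AlternatingMap.finiteDimensional (m : ℕ) :
    FiniteDimensional ℝ (AlternatingMap ℝ W V (Fin m)) :=
  FiniteDimensional.of_injective (AlternatingMap.toMultilinearMapLM (S := ℝ))
    AlternatingMap.coe_multilinearMap_injective

/-- If `e` maps `P` into `S` and the kernel of `e` on `P` lies in `Q`, then
`dim P ≤ dim S + dim Q`. -/
theorem finrank_le_add_of_linearMap {X Y : Type*} [AddCommGroup X] [Module ℝ X]
    [FiniteDimensional ℝ X] [AddCommGroup Y] [Module ℝ Y] [FiniteDimensional ℝ Y]
    {P Q : Submodule ℝ X} {S : Submodule ℝ Y} (e : X →ₗ[ℝ] Y) (hS : ∀ x ∈ P, e x ∈ S)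
    (hQ : ∀ x ∈ P, e x = 0 → x ∈ Q) : finrank ℝ P ≤ finrank ℝ S + finrank ℝ Q := by
  rw [← LinearMap.finrank_range_add_finrank_ker (e.comp P.subtype)]
  refine Nat.add_le_add (Submodule.finrank_mono ?_) ?_
  · rintro _ ⟨x, rfl⟩
    exact hS x x.2
  · rw [← Submodule.finrank_map_subtype_eq P]
    refine Submodule.finrank_mono ?_
    rintro _ ⟨x, hx, rfl⟩
    exact hQ x x.2 hx

/-- The character of the prolongation along a step `A ⊂ B` of a flag is at most `dim T_A`. -/
theorem finrank_prolongation_le {k : ℕ}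
    (T : Submodule ℝ (AlternatingMap ℝ W V (Fin (k + 1)))) {A B : Submodule ℝ W}
    (hAB : A ≤ B) (h : finrank ℝ B = finrank ℝ A + 1) :
    finrank ℝ ↥(prolongation T ⊓ homVanishing A (AlternatingMap ℝ W V (Fin (k + 1)))) ≤
      finrank ℝ ↥(T ⊓ vanishingOn (k + 1) A) +
      finrank ℝ ↥(prolongation T ⊓ homVanishing B (AlternatingMap ℝ W V (Fin (k + 1)))) := by
  obtain ⟨w, hw⟩ := exists_forall_mem_add_smul hAB h
  refine finrank_le_add_of_linearMap (LinearMap.applyₗ (R := ℝ) w)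
    (fun ξ hξ => prolongation_apply_mem hξ w) fun ξ hξ hξw => ⟨hξ.1, fun b hb => ?_⟩
  obtain ⟨a, ha, r, rfl⟩ := hw b hb
  have hξa : ξ a = 0 := hξ.2 a ha
  have hξw' : ξ w = 0 := hξw
  simp [hξa, hξw']

theorem le_last_add_sum_Ici_sub {n : ℕ} (f : Fin (n + 1) → ℕ) (i : Fin n) :
    f i.castSucc ≤ f (Fin.last n) + ∑ j ∈ Finset.Ici i, (f j.castSucc - f j.succ) := by
  induction n with
  | zero => exact i.elim0
  | succ n ih =>
    induction i using Fin.lastCases with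
    | last =>
      have : Finset.Ici (Fin.last n) = {Fin.last n} := by
        ext j
        simp [Fin.last_le_iff]
      simp only [this, Finset.sum_singleton, Fin.succ_last, Nat.succ_eq_add_one]
      omega
    | cast i =>
      have hIci : Finset.Ici i.castSucc =
          insert (Fin.last n) ((Finset.Ici i).map Fin.castSuccEmb) := by
        ext j
        induction j using Fin.lastCases with
        | last => simp [Fin.le_last]
        | cast j => simp [(Fin.castSucc_lt_last j).ne]
      rw [hIci, Finset.sum_insert (by simp), Finset.sum_map]
      have := ih (fun j => f j.castSucc) i
      simp only [Fin.coe_castSuccEmb, Fin.succ_castSucc, Fin.succ_last, Nat.succ_eq_add_one] at this ⊢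
      omega

set_option linter.unusedSectionVars false in
/-- An alternating map vanishing on the whole space is zero. -/
theorem vanishingOn_top (m : ℕ) : vanishingOn (W := W) (V := V) m ⊤ = ⊥ := by
  refine (Submodule.eq_bot_iff _).2 fun c hc => ?_
  ext u
  exact hc u fun _ => Submodule.mem_top

/-- **Bound on the Cartan characters of the first prolongation**: with
`(T^{(1)})_U = {ξ ∈ T^{(1)} : ξ|_U = 0}` and
`s^{(1)}ᵢ = dim (T^{(1)})_{W_{i-1}} − dim (T^{(1)})_{W_i}`, one has
`s^{(1)}ᵢ ≤ sᵢ + s_{i+1} + … + sₙ` for every `i`. -/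
theorem prolongation_characters_bound {k n : ℕ}
    (T : Submodule ℝ (AlternatingMap ℝ W V (Fin (k + 1))))
    (Wf : Fin (n + 1) → Submodule ℝ W)
    (hmono : Monotone Wf) (hbot : Wf 0 = ⊥) (htop : Wf (Fin.last n) = ⊤)
    (hdim : ∀ i : Fin (n + 1), finrank ℝ (Wf i) = (i : ℕ)) :
    ∀ i : Fin n,
      finrank ℝ ↥(prolongation T ⊓
          homVanishing (Wf i.castSucc) (AlternatingMap ℝ W V (Fin (k + 1)))) -
      finrank ℝ ↥(prolongation T ⊓
          homVanishing (Wf i.succ) (AlternatingMap ℝ W V (Fin (k + 1)))) ≤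
      ∑ j ∈ Finset.Ici i,
        (finrank ℝ ↥(T ⊓ vanishingOn (k + 1) (Wf j.castSucc)) -
         finrank ℝ ↥(T ⊓ vanishingOn (k + 1) (Wf j.succ))) := by
  intro i
  have hstep := finrank_prolongation_le T (hmono (Fin.castSucc_lt_succ (i := i)).le)
    (by simp [hdim])
  have hsum := le_last_add_sum_Ici_sub
    (fun j => finrank ℝ ↥(T ⊓ vanishingOn (k + 1) (Wf j))) i
  have hlast : finrank ℝ ↥(T ⊓ vanishingOn (k + 1) (Wf (Fin.last n))) = 0 := by
    rw [htop, vanishingOn_top, inf_bot_eq, finrank_bot]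
  simp only [hlast] at hsum
  omega
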